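/- Let all labels be closed axis-aligned rectangles whose widths lie between σx_min and σx_max and whose heights lie between σy_min and σy_max, where 0 < σx_min ≤ σx_max and 0 < σy_min ≤ σy_max. If exactly one label lᵢ performs a movement from its start position to its end position (candidate positions of its point pᵢ), while every other label is stationary, the stationary labels are pairwise non-overlapping, and each stationary label is non-overlapping with both the start and end positions of lᵢ, then at most ⌈σx_max/σx_min⌉ · ⌈σy_max/σy_min⌉ stationary labels overlap lᵢ at some moment during the movement. -/

import Mathlib

open Set

/-- The closed axis-aligned rectangle with lower-left corner `a`, width `w` and height `h`. -/
def rectLabel (a : ℝ × ℝ) (w h : ℝ) : Set (ℝ × ℝ) :=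
  Set.Icc a.1 (a.1 + w) ×ˢ Set.Icc a.2 (a.2 + h)

/-- Two rectangular labels overlap if their interiors intersect. -/
def ROverlap (a : ℝ × ℝ) (w h : ℝ) (b : ℝ × ℝ) (w' h' : ℝ) : Prop :=
  (interior (rectLabel a w h) ∩ interior (rectLabel b w' h')).Nonempty

/-- `a` is the lower-left corner of one of the four candidate positions of point `p` for a
label of width `w` and height `h` (the four closed rectangles having `p` as a corner). -/
def IsCandidateR (w h : ℝ) (p a : ℝ × ℝ) : Prop :=
  a = p ∨ a = (p.1 - w, p.2) ∨ a = (p.1, p.2 - h) ∨ a = (p.1 - w, p.2 - h)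

/-- Two candidate rectangles of dimensions `w × h` (given by lower-left corners) share an edge. -/
def SharesEdgeR (w h : ℝ) (a b : ℝ × ℝ) : Prop :=
  (a.1 = b.1 ∧ (a.2 - b.2 = h ∨ b.2 - a.2 = h)) ∨
  (a.2 = b.2 ∧ (a.1 - b.1 = w ∨ b.1 - a.1 = w))

/-- A movement of a `w × h` rectangular label of point `p` from candidate position `S` to
candidate position `E`.  If `S` and `E` share an edge we set `I = E` and the label translates
directly from `S` to `E`; if `S` and `E` are diagonally opposite the label translates through
the specified intermediate candidate position `I`, sharing an edge with both `S` and `E`. -/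
structure RMovement (w h : ℝ) where
  p : ℝ × ℝ
  S : ℝ × ℝ
  I : ℝ × ℝ
  E : ℝ × ℝ
  candS : IsCandidateR w h p S
  candI : IsCandidateR w h p I
  candE : IsCandidateR w h p E
  legs : (I = E ∧ SharesEdgeR w h S E) ∨
    (SharesEdgeR w h S I ∧ SharesEdgeR w h I E ∧ S.1 ≠ E.1 ∧ S.2 ≠ E.2)

/-- Position (lower-left corner) of the moving rectangular label at time `t` after the start of
its movement, one axis-aligned translation at a time: first from `S` to `I` during `[0,1]`,
then from `I` to `E` during `[1,2]`; before the movement the label rests at its start position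
and after the movement at its end position. -/
noncomputable def RMovement.pos {w h : ℝ} (m : RMovement w h) (t : ℝ) : ℝ × ℝ :=
  if t ≤ 0 then m.S
  else if t ≤ 1 then m.S + t • (m.I - m.S)
  else if t ≤ 2 then m.I + (t - 1) • (m.E - m.I)
  else m.E

/-!
Let the moving label have width `w`, and the stationary ones width at least `σx`. A stationary label
hit by the moving label but disjoint from both `S` and `E` must overlap the intermediate position
`I`, because a translation between two positions sharing an edge sweeps only their union. So a
direct movement hits nothing. In a diagonal movement one of `S`, `E` is the horizontal neighbour of
`I` and the other the vertical one. A label overlapping `I` but not its horizontal neighbour stays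
on the side of `I` of the wall between the two, so its distance from this wall lies in `[0, w)`; cut
this range into `⌈w / σx⌉` slots of length `σx`. If two labels share their slot, their horizontal
projections overlap, since both are at least `σx` wide. With the same slots in the vertical
direction, disjoint labels get distinct pairs of slots.
-/

section Intervals

/-- The intervals of length `w` with left ends `a` and `b` are adjacent: they share one end and lie
on opposite sides of it. This is the one-dimensional analogue of `SharesEdgeR`. -/
def Abut {G : Type*} [Sub G] (w a b : G) : Prop :=
  a - b = w ∨ b - a = w

theorem Abut.symm {G : Type*} [Sub G] {w a b : G} (h : Abut w a b) : Abut w b a :=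
  Or.symm h

variable {K : Type*} [Field K] [LinearOrder K] [IsStrictOrderedRing K]

/-- The intervals `[a, a + l]` and `[b, b + l']` overlap, that is, their interiors intersect: this
is the one-dimensional analogue of `ROverlap`, with an interval given by left end and length. -/
def IntervalsOverlap (a l b l' : K) : Prop :=
  (Ioo a (a + l) ∩ Ioo b (b + l')).Nonempty

/-- For abutting intervals `[c, c + w]` and `[c', c' + w]`, the distance from their common end, the
*wall*, to the nearer end of an interval `[a, a + l]` on the side of `c`. It is signed: negative if
`[a, a + l]` extends across the wall. -/
def wallDist (w c c' a l : K) : K :=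
  if c' < c then a - c else c + w - (a + l)

variable {a b l l' c c' w σ u v x : K}

theorem intervalsOverlap_iff :
    IntervalsOverlap a l b l' ↔ (0 < l ∧ 0 < l') ∧ a < b + l' ∧ b < a + l := by
  rw [IntervalsOverlap, Ioo_inter_Ioo, nonempty_Ioo, max_lt_iff, lt_min_iff, lt_min_iff,
    lt_add_iff_pos_right, lt_add_iff_pos_right]
  tauto

theorem IntervalsOverlap.left_or_right_of_mem_uIcc (hab : Abut w a b) (hx : x ∈ uIcc a b)
    (h : IntervalsOverlap c l x w) : IntervalsOverlap c l a w ∨ IntervalsOverlap c l b w := by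
  wlog hle : a ≤ b generalizing a b
  · exact (this hab.symm (uIcc_comm a b ▸ hx) (le_of_not_ge hle)).symm
  simp only [intervalsOverlap_iff] at h ⊢
  obtain ⟨⟨hl, hw⟩, hcx, hxc⟩ := h
  rw [uIcc_of_le hle] at hx
  have hb : b = a + w := by rcases hab with hab | hab <;> linarith
  rcases lt_or_ge c (a + w) with hca | hca
  · exact .inl ⟨⟨hl, hw⟩, hca, hx.1.trans_lt hxc⟩
  · exact .inr ⟨⟨hl, hw⟩, hcx.trans_le (by linarith [hx.2]), by linarith⟩

theorem wallDist_mem_Ico (hcc' : Abut w c c') (hc : IntervalsOverlap a l c w)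
    (hc' : ¬ IntervalsOverlap a l c' w) : wallDist w c c' a l ∈ Ico 0 w := by
  rw [intervalsOverlap_iff] at hc hc'
  obtain ⟨⟨hl, hw⟩, hac, hca⟩ := hc
  have hsep : c' + w ≤ a ∨ a + l ≤ c' := by
    by_contra! hmeet
    exact hc' ⟨⟨hl, hw⟩, hmeet⟩
  rcases hcc' with hcc' | hcc'
  · rw [wallDist, if_pos (by linarith)]
    constructor <;> rcases hsep with hsep | hsep <;> linarith
  · rw [wallDist, if_neg (by linarith)]
    constructor <;> rcases hsep with hsep | hsep <;> linarith

theorem intervalsOverlap_of_abs_wallDist_sub_lt (hσ : 0 < σ) (hl : σ ≤ l) (hl' : σ ≤ l')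
    (h : |wallDist w c c' a l - wallDist w c c' b l'| < σ) : IntervalsOverlap a l b l' := by
  refine intervalsOverlap_iff.2 ⟨⟨hσ.trans_le hl, hσ.trans_le hl'⟩, ?_⟩
  rw [abs_lt] at h
  unfold wallDist at h
  split_ifs at h <;> constructor <;> linarith

variable [FloorSemiring K]

theorem abs_sub_lt_of_floor_div_eq (hσ : 0 < σ) (hu : 0 ≤ u) (hv : 0 ≤ v)
    (h : ⌊u / σ⌋₊ = ⌊v / σ⌋₊) : |u - v| < σ := by
  obtain ⟨hu₁, hu₂⟩ := (Nat.floor_eq_iff (div_nonneg hu hσ.le)).1 h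
  obtain ⟨hv₁, hv₂⟩ := (Nat.floor_eq_iff (div_nonneg hv hσ.le)).1 rfl
  have hdiv : |u / σ - v / σ| < 1 := abs_sub_lt_iff.2 ⟨by linarith, by linarith⟩
  rwa [← sub_div, abs_div, abs_of_pos hσ, div_lt_one hσ] at hdiv

/-- The index of the slot of length `σ` containing the nearer end of `[a, a + l]`, the slots being
numbered from `0` at the wall between `[c, c + w]` and `[c', c' + w]`. -/
def wallSlot (σ w c c' a l : K) : ℕ :=
  ⌊wallDist w c c' a l / σ⌋₊

theorem wallSlot_lt (hσ : 0 < σ) (h : wallDist w c c' a l ∈ Ico 0 w) :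
    wallSlot σ w c c' a l < ⌈w / σ⌉₊ := by
  rw [wallSlot, Nat.floor_lt (div_nonneg h.1 hσ.le)]
  exact (div_lt_div_of_pos_right h.2 hσ).trans_le (Nat.le_ceil _)

theorem intervalsOverlap_of_wallSlot_eq (hσ : 0 < σ) (hl : σ ≤ l) (hl' : σ ≤ l')
    (ha : 0 ≤ wallDist w c c' a l) (hb : 0 ≤ wallDist w c c' b l')
    (h : wallSlot σ w c c' a l = wallSlot σ w c c' b l') : IntervalsOverlap a l b l' :=
  intervalsOverlap_of_abs_wallDist_sub_lt hσ hl hl' (abs_sub_lt_of_floor_div_eq hσ ha hb h)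

end Intervals

section Rectangles

variable {w h w' h' : ℝ} {a b x : ℝ × ℝ}

theorem rOverlap_iff :
    ROverlap a w h b w' h' ↔
      IntervalsOverlap a.1 w b.1 w' ∧ IntervalsOverlap a.2 h b.2 h' := by
  simp only [ROverlap, rectLabel, IntervalsOverlap, interior_prod_eq, interior_Icc,
    prod_inter_prod, prod_nonempty_iff]

theorem ROverlap.left_or_right_of_mem_segment (hab : SharesEdgeR w h a b)
    {y : ℝ × ℝ} (hy : y ∈ segment ℝ a b) (hxy : ROverlap x w' h' y w h) :
    ROverlap x w' h' a w h ∨ ROverlap x w' h' b w h := by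
  obtain ⟨hy₁, hy₂⟩ := Prod.segment_subset _ _ hy
  rw [segment_eq_uIcc] at hy₁ hy₂
  simp only [rOverlap_iff] at hxy ⊢
  rcases hab with ⟨heq, habut⟩ | ⟨heq, habut⟩
  · rw [heq, uIcc_self, mem_singleton_iff] at hy₁
    rw [heq, ← hy₁, ← and_or_left]
    exact ⟨hxy.1, hxy.2.left_or_right_of_mem_uIcc habut hy₂⟩
  · rw [heq, uIcc_self, mem_singleton_iff] at hy₂
    rw [heq, ← hy₂, ← or_and_right]
    exact ⟨hxy.1.left_or_right_of_mem_uIcc habut hy₁, hxy.2⟩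

end Rectangles

namespace RMovement

variable {w h : ℝ} (m : RMovement w h)

theorem pos_mem_segment (t : ℝ) : m.pos t ∈ segment ℝ m.S m.I ∪ segment ℝ m.I m.E := by
  unfold pos
  split_ifs with h₀ h₁ h₂
  · exact .inl (left_mem_segment ℝ _ _)
  · exact .inl (segment_eq_image' ℝ m.S m.I ▸ ⟨t, ⟨by linarith, h₁⟩, rfl⟩)
  · exact .inr (segment_eq_image' ℝ m.I m.E ▸ ⟨t - 1, ⟨by linarith, by linarith⟩, rfl⟩)
  · exact .inr (right_mem_segment ℝ _ _)

theorem sharesEdgeR_start_mid : SharesEdgeR w h m.S m.I := by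
  rcases m.legs with ⟨hIE, hSE⟩ | ⟨hSI, -⟩
  · exact hIE ▸ hSE
  · exact hSI

theorem rOverlap_mid_of_rOverlap_pos {w' h' t : ℝ} {x : ℝ × ℝ} (hS : ¬ ROverlap x w' h' m.S w h)
    (hE : ¬ ROverlap x w' h' m.E w h) (ht : ROverlap x w' h' (m.pos t) w h) :
    ROverlap x w' h' m.I w h := by
  rcases m.pos_mem_segment t with hmem | hmem
  · exact (ht.left_or_right_of_mem_segment m.sharesEdgeR_start_mid hmem).resolve_left hS
  · rcases m.legs with ⟨hIE, -⟩ | ⟨-, hIE, -⟩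
    · rw [hIE, segment_same, mem_singleton_iff] at hmem
      exact absurd (hmem ▸ ht) hE
    · exact (ht.left_or_right_of_mem_segment hIE hmem).resolve_right hE

end RMovement

section Counting

variable {σx σy w h : ℝ} {ι : Type*} {wd hd : ι → ℝ} {stat : ι → ℝ × ℝ}

theorem encard_rOverlap_corner_le (hσx : 0 < σx) (hσy : 0 < σy) {I H V : ℝ × ℝ}
    (hIH : I.2 = H.2 ∧ Abut w I.1 H.1) (hIV : I.1 = V.1 ∧ Abut h I.2 V.2)
    (hwd : ∀ i, σx ≤ wd i) (hhd : ∀ i, σy ≤ hd i)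
    (hfree : Pairwise fun i j ↦ ¬ ROverlap (stat i) (wd i) (hd i) (stat j) (wd j) (hd j))
    (hH : ∀ i, ¬ ROverlap (stat i) (wd i) (hd i) H w h)
    (hV : ∀ i, ¬ ROverlap (stat i) (wd i) (hd i) V w h) :
    {i | ROverlap (stat i) (wd i) (hd i) I w h}.encard ≤ ↑(⌈w / σx⌉₊ * ⌈h / σy⌉₊) := by
  simp only [rOverlap_iff] at hfree hH hV ⊢
  rw [← hIH.1] at hH
  rw [← hIV.1] at hV
  set hit := {i | IntervalsOverlap (stat i).1 (wd i) I.1 w ∧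
    IntervalsOverlap (stat i).2 (hd i) I.2 h}
  have hdistH : ∀ i ∈ hit, wallDist w I.1 H.1 (stat i).1 (wd i) ∈ Ico 0 w :=
    fun i hi ↦ wallDist_mem_Ico hIH.2 hi.1 fun hiH ↦ hH i ⟨hiH, hi.2⟩
  have hdistV : ∀ i ∈ hit, wallDist h I.2 V.2 (stat i).2 (hd i) ∈ Ico 0 h :=
    fun i hi ↦ wallDist_mem_Ico hIV.2 hi.2 fun hiV ↦ hV i ⟨hi.1, hiV⟩
  let slots : ι → ℕ × ℕ := fun i ↦
    (wallSlot σx w I.1 H.1 (stat i).1 (wd i), wallSlot σy h I.2 V.2 (stat i).2 (hd i))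
  let grid : Finset (ℕ × ℕ) := Finset.range ⌈w / σx⌉₊ ×ˢ Finset.range ⌈h / σy⌉₊
  have hmaps : MapsTo slots hit grid := fun i hi ↦ Finset.mem_product.2
    ⟨Finset.mem_range.2 (wallSlot_lt hσx (hdistH i hi)),
      Finset.mem_range.2 (wallSlot_lt hσy (hdistV i hi))⟩
  have hinj : InjOn slots hit := by
    intro i hi j hj hij
    obtain ⟨hijH, hijV⟩ := Prod.mk.inj hij
    by_contra hne
    exact hfree hne
      ⟨intervalsOverlap_of_wallSlot_eq hσx (hwd i) (hwd j) (hdistH i hi).1 (hdistH j hj).1 hijH,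
        intervalsOverlap_of_wallSlot_eq hσy (hhd i) (hhd j) (hdistV i hi).1 (hdistV j hj).1 hijV⟩
  calc hit.encard ≤ (grid : Set (ℕ × ℕ)).encard := encard_le_encard_of_injOn hmaps hinj
    _ = ↑(⌈w / σx⌉₊ * ⌈h / σy⌉₊) := by
      simp only [grid, encard_coe_eq_coe_finsetCard, Finset.card_product, Finset.card_range]

theorem rect_overlaps_le_general (hσx : 0 < σx) (hσy : 0 < σy) (m : RMovement w h)
    (hwd : ∀ i, σx ≤ wd i) (hhd : ∀ i, σy ≤ hd i)
    (hfree : Pairwise fun i j ↦ ¬ ROverlap (stat i) (wd i) (hd i) (stat j) (wd j) (hd j))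
    (hS : ∀ i, ¬ ROverlap (stat i) (wd i) (hd i) m.S w h)
    (hE : ∀ i, ¬ ROverlap (stat i) (wd i) (hd i) m.E w h) :
    {i | ∃ t, ROverlap (stat i) (wd i) (hd i) (m.pos t) w h}.encard ≤
      ↑(⌈w / σx⌉₊ * ⌈h / σy⌉₊) := by
  have hsub : {i | ∃ t, ROverlap (stat i) (wd i) (hd i) (m.pos t) w h} ⊆
      {i | ROverlap (stat i) (wd i) (hd i) m.I w h} :=
    fun i ⟨_, ht⟩ ↦ m.rOverlap_mid_of_rOverlap_pos (hS i) (hE i) ht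
  refine (encard_le_encard hsub).trans ?_
  rcases m.legs with ⟨hIE, -⟩ | ⟨hSI, hIE, hne₁, hne₂⟩
  · simp [hIE, hE]
  · rcases hSI with ⟨hSI, hSI'⟩ | ⟨hSI, hSI'⟩ <;> rcases hIE with ⟨hIE, hIE'⟩ | ⟨hIE, hIE'⟩
    · exact absurd (hSI.trans hIE) hne₁
    · exact encard_rOverlap_corner_le hσx hσy ⟨hIE, hIE'⟩ ⟨hSI.symm, hSI'.symm⟩ hwd hhd hfree hE hS
    · exact encard_rOverlap_corner_le hσx hσy ⟨hSI.symm, hSI'.symm⟩ ⟨hIE, hIE'⟩ hwd hhd hfree hS hE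
    · exact absurd (hSI.trans hIE) hne₂

end Counting

/-- Let all labels be closed axis-aligned rectangles whose widths lie between `σxmin` and
`σxmax` and whose heights lie between `σymin` and `σymax`.  If exactly one label performs a
movement from its start position to its end position while every other label is stationary,
the stationary labels are pairwise non-overlapping, and each stationary label overlaps neither
the start nor the end position of the moving label, then at most
`⌈σxmax / σxmin⌉ * ⌈σymax / σymin⌉` stationary labels overlap the moving label at some moment
during the movement. -/
theorem rect_overlaps_le (σxmin σxmax σymin σymax : ℝ)
    (hx0 : 0 < σxmin) (hx : σxmin ≤ σxmax) (hy0 : 0 < σymin) (hy : σymin ≤ σymax)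
    (w h : ℝ) (hw₁ : σxmin ≤ w) (hw₂ : w ≤ σxmax) (hh₁ : σymin ≤ h) (hh₂ : h ≤ σymax)
    (m : RMovement w h)
    (ι : Type*) [Fintype ι] (wd hd : ι → ℝ) (stat : ι → ℝ × ℝ)
    (hdims : ∀ i : ι, σxmin ≤ wd i ∧ wd i ≤ σxmax ∧ σymin ≤ hd i ∧ hd i ≤ σymax)
    (hfree : ∀ i j : ι, i ≠ j →
      ¬ ROverlap (stat i) (wd i) (hd i) (stat j) (wd j) (hd j))
    (hS : ∀ i : ι, ¬ ROverlap (stat i) (wd i) (hd i) m.S w h)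
    (hE : ∀ i : ι, ¬ ROverlap (stat i) (wd i) (hd i) m.E w h) :
    {i : ι | ∃ t : ℝ, ROverlap (stat i) (wd i) (hd i) (m.pos t) w h}.ncard ≤
      ⌈σxmax / σxmin⌉₊ * ⌈σymax / σymin⌉₊ := by
  have hle := rect_overlaps_le_general hx0 hy0 m (fun i ↦ (hdims i).1) (fun i ↦ (hdims i).2.2.1)
    hfree hS hE
  exact (encard_le_coe_iff_finite_ncard_le.1 hle).2.trans (by gcongr)
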